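/- Let A be a generalized Cartan matrix indexed by I, and suppose I = I_0 ⊔ N where the nodes in N together with a distinguished node 0 ∈ I_0 form a simple chain (type A) attached to I_0 at node 0, and every proper connected subdiagram containing part of both I_0 and N that is of finite type must intersect I_0 in a spherical subset. Then for the family E_{9+n} (E_9 extended by a chain A_n), a subset J ⊆ I is spherical if and only if J ∩ I_0 is spherical for E_9, where I_0 is the set of nodes of the E_9 subdiagram. -/

import Mathlib

/-- Adjacency in the generalized Dynkin diagrams `E_{9+n}`: nodes are integers
`-n, …, -1, 0, 1, …, 7` forming a chain, with the extra node `8` attached to node `5`. -/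
def eAdj (i j : ℤ) : Prop :=
  (i ≠ 8 ∧ j ≠ 8 ∧ (i - j = 1 ∨ j - i = 1)) ∨ (i = 5 ∧ j = 8) ∨ (i = 8 ∧ j = 5)

instance (i j : ℤ) : Decidable (eAdj i j) := by unfold eAdj; infer_instance

/-- The generalized Cartan matrix entries for the `E`-family diagrams. -/
def eCartan (i j : ℤ) : ℤ := if i = j then 2 else if eAdj i j then -1 else 0

/-- The principal submatrix of the `E`-family Cartan matrix with indices in `J`. -/
def eMat (J : Finset ℤ) : Matrix J J ℤ := fun i j => eCartan i.1 j.1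

/-- A finite set of nodes is spherical if all principal minors of the corresponding
principal submatrix of the `E`-family Cartan matrix are positive (finite type). -/
def eSph (J : Finset ℤ) : Prop := ∀ K : Finset ℤ, K ⊆ J → 0 < (eMat K).det

theorem aux_row {ι : Type*} [Fintype ι] [DecidableEq ι] (A : Matrix ι ι ℤ) (m : ι)
    (h : ∀ j, j ≠ m → A m j = 0) :
    A.det = A m m * (A.submatrix (Subtype.val : {x // x ≠ m} → ι) Subtype.val).det := by
  have h1 := Matrix.twoBlockTriangular_det A (fun x => x ≠ m) (by
    intro i hi j hj
    simp only [ne_eq, not_not] at hi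
    subst hi
    exact h j hj)
  rw [h1, mul_comm]
  congr 1
  have hsub : Subsingleton {x // ¬ (x ≠ m)} :=
    ⟨by rintro ⟨x, hx⟩ ⟨y, hy⟩; simp at hx hy; simp [hx, hy]⟩
  rw [Matrix.det_eq_elem_of_subsingleton _ (⟨m, by simp⟩ : {x // ¬ (x ≠ m)})]
  rfl

theorem aux_col {ι : Type*} [Fintype ι] [DecidableEq ι] (A : Matrix ι ι ℤ) (m : ι)
    (h : ∀ j, j ≠ m → A j m = 0) :
    A.det = A m m * (A.submatrix (Subtype.val : {x // x ≠ m} → ι) Subtype.val).det := by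
  have := aux_row A.transpose m h
  rw [Matrix.det_transpose] at this
  rw [this, ← Matrix.det_transpose (A.submatrix _ _)]
  rfl

theorem aux_swap {ι : Type*} [Fintype ι] [DecidableEq ι] (B : Matrix ι ι ℤ) (m p : ι)
    (hmp : m ≠ p) (h1 : ∀ j, B m j = if j = p then 1 else 0) (h2 : ∀ j, B j m = if j = p then -1 else 0) :
    B.det = (B.submatrix (fun x : {y : {x // x ≠ p} // y ≠ ⟨m, hmp⟩} => x.1.1)
      (fun x : {y : {x // x ≠ p} // y ≠ ⟨m, hmp⟩} => x.1.1)).det := by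
  have hs := Matrix.det_permute (Equiv.swap m p) B
  rw [Equiv.Perm.sign_swap hmp] at hs
  have hr := aux_row (B.submatrix (Equiv.swap m p) id) p (by
    intro j hj; simp [h1, hj])
  have hc := aux_col ((B.submatrix (Equiv.swap m p) id).submatrix
    (Subtype.val : {x // x ≠ p} → ι) Subtype.val) ⟨m, hmp⟩ (by
    rintro ⟨j, hj⟩ hjm
    have hjm' : j ≠ m := fun e => hjm (by simp [e])
    simp [h2, Equiv.swap_apply_of_ne_of_ne hjm' hj, hj])
  rw [hc] at hr
  have e1 : (B.submatrix (Equiv.swap m p) id) p p = 1 := by simp [h1]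
  have e2 : ((B.submatrix (Equiv.swap m p) id).submatrix
    (Subtype.val : {x // x ≠ p} → ι) (Subtype.val : {x // x ≠ p} → ι)) ⟨m, hmp⟩ ⟨m, hmp⟩ = -1 := by simp [h2]
  have e3 : (((B.submatrix (Equiv.swap m p) id).submatrix
      (Subtype.val : {x // x ≠ p} → ι) (Subtype.val : {x // x ≠ p} → ι)).submatrix
      (Subtype.val : {y : {x // x ≠ p} // y ≠ ⟨m, hmp⟩} → {x // x ≠ p})
      (Subtype.val : {y : {x // x ≠ p} // y ≠ ⟨m, hmp⟩} → {x // x ≠ p}))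
      = B.submatrix (fun x => x.1.1) (fun x => x.1.1) := by
    ext ⟨⟨x, hx⟩, hx'⟩ ⟨⟨y, hy⟩, hy'⟩
    have : x ≠ m := fun e => hx' (by simp [e])
    simp [Equiv.swap_apply_of_ne_of_ne this hx]
  rw [e1, e2, e3, hs] at hr
  simp at hr
  linarith

theorem eMat_det_equiv {ι : Type*} [Fintype ι] [DecidableEq ι] (K : Finset ℤ) (f : ι → ℤ)
    (hf : Function.Injective f) (hK : ∀ x, x ∈ K ↔ ∃ i, f i = x) (M : Matrix ι ι ℤ)
    (hM : ∀ i j, M i j = eCartan (f i) (f j)) : M.det = (eMat K).det := by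
  let g : ι → K := fun i => ⟨f i, (hK _).2 ⟨i, rfl⟩⟩
  have hg : Function.Bijective g := by
    constructor
    · intro a b hab
      exact hf (congrArg Subtype.val hab)
    · rintro ⟨x, hx⟩
      obtain ⟨i, hi⟩ := (hK x).1 hx
      exact ⟨i, Subtype.ext hi⟩
  rw [← Matrix.det_submatrix_equiv_self (Equiv.ofBijective g hg) (eMat K)]
  congr 1
  ext i j
  exact hM i j

theorem eCartan_symm (i j : ℤ) : eCartan i j = eCartan j i := by
  unfold eCartan eAdj
  congr 1
  · simp [eq_comm]
  · congr 1
    apply propext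
    omega

/-- The principal minor on `K`. -/
def dt (K : Finset ℤ) : ℤ := (eMat K).det

/-- leaf with absent neighbour -/
theorem leaf0 (K : Finset ℤ) (m : ℤ) (hm : m ∈ K) (h : ∀ j ∈ K, j ≠ m → ¬ eAdj m j) :
    dt K = 2 * dt (K.erase m) := by
  unfold dt
  rw [aux_row (eMat K) ⟨m, hm⟩]
  · congr 1
    · simp [eMat, eCartan]
    · apply eMat_det_equiv (K.erase m) (fun x => x.1.1)
      · intro a b hab; exact Subtype.ext (Subtype.ext hab)
      · intro x
        simp only [Finset.mem_erase]
        constructor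
        · rintro ⟨h1, h2⟩
          exact ⟨⟨⟨x, h2⟩, by simpa using h1⟩, rfl⟩
        · rintro ⟨⟨⟨y, hy⟩, hy'⟩, rfl⟩
          exact ⟨by simpa using hy', hy⟩
      · intro i j; rfl
  · rintro ⟨j, hj⟩ hjm
    have : j ≠ m := by simpa using hjm
    simp [eMat, eCartan, this.symm, h j hj this]

theorem leaf1 (K : Finset ℤ) (m p : ℤ) (hm : m ∈ K) (hp : p ∈ K) (hmp : m ≠ p) (ha : eAdj m p)
    (h : ∀ j ∈ K, j ≠ m → j ≠ p → ¬ eAdj m j) :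
    dt K = 2 * dt (K.erase m) - dt ((K.erase m).erase p) := by
  unfold dt
  set A := eMat K with hA
  set m' : K := ⟨m, hm⟩
  set p' : K := ⟨p, hp⟩
  have hmp' : m' ≠ p' := by simpa [m', p'] using hmp
  have hrow : A m' = (2 : ℤ) • (Pi.single m' 1 : K → ℤ) + (-1 : ℤ) • (Pi.single p' 1 : K → ℤ) := by
    ext ⟨j, hj⟩
    by_cases h1 : j = m
    · subst h1
      simp [A, eMat, eCartan, m', p', hmp]
    · by_cases h2 : j = p
      · subst h2
        simp [A, eMat, eCartan, m', p', hmp, hmp.symm, ha]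
      · simp [A, eMat, eCartan, m', p', h1, h2, Ne.symm h1, h j hj h1 h2]
  have hdet : A.det = 2 * (A.updateRow m' (Pi.single m' 1)).det
      + (-1) * (A.updateRow m' (Pi.single p' 1)).det := by
    conv_lhs => rw [← Matrix.updateRow_eq_self A m', hrow]
    rw [Matrix.det_updateRow_add, Matrix.det_updateRow_smul, Matrix.det_updateRow_smul]
  rw [hdet, aux_row (A.updateRow m' (Pi.single m' 1)) m', aux_swap _ m' p' hmp']
  · have e1 : ((A.updateRow m' (Pi.single m' 1)).submatrix
        (Subtype.val : {x // x ≠ m'} → K) Subtype.val).det = (eMat (K.erase m)).det := by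
      apply eMat_det_equiv (K.erase m) (fun x => x.1.1)
      · intro a b hab; exact Subtype.ext (Subtype.ext hab)
      · intro x
        simp only [Finset.mem_erase]
        constructor
        · rintro ⟨h1, h2⟩
          exact ⟨⟨⟨x, h2⟩, by simpa [m'] using h1⟩, rfl⟩
        · rintro ⟨⟨⟨y, hy⟩, hy'⟩, rfl⟩
          exact ⟨by simpa [m'] using hy', hy⟩
      · rintro ⟨i, hi⟩ ⟨j, hj⟩
        simp [Matrix.updateRow_ne hi]
        rfl
    have e2 : ((A.updateRow m' (Pi.single p' 1)).submatrix
        (fun x : {y : {x // x ≠ p'} // y ≠ ⟨m', hmp'⟩} => x.1.1)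
        (fun x : {y : {x // x ≠ p'} // y ≠ ⟨m', hmp'⟩} => x.1.1)).det
        = (eMat ((K.erase m).erase p)).det := by
      apply eMat_det_equiv _ (fun x => x.1.1.1)
      · intro a b hab; exact Subtype.ext (Subtype.ext (Subtype.ext hab))
      · intro x
        simp only [Finset.mem_erase]
        constructor
        · rintro ⟨h1, h2, h3⟩
          exact ⟨⟨⟨⟨x, h3⟩, by simpa [p'] using h1⟩, by simpa [m'] using h2⟩, rfl⟩
        · rintro ⟨⟨⟨⟨y, hy⟩, hy'⟩, hy''⟩, rfl⟩
          exact ⟨by simpa [p'] using hy', by simpa [m'] using hy'', hy⟩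
      · rintro ⟨⟨i, hi⟩, hi'⟩ ⟨j, hj⟩
        have : i ≠ m' := fun e => hi' (by simp [e])
        simp [Matrix.updateRow_ne this]
        rfl
    rw [e1, e2]
    simp
    ring
  · intro j; simp [Pi.single_apply]
  · rintro ⟨j, hj⟩
    by_cases h1 : j = m
    · subst h1
      simp [m', p', hmp]
    · have : (⟨j, hj⟩ : K) ≠ m' := by simpa [m'] using h1
      rw [Matrix.updateRow_ne this]
      show eCartan j m = _
      rw [eCartan_symm]
      by_cases h2 : j = p
      · subst h2
        simp [eCartan, p', hmp, ha]
      · simp [eCartan, p', h2, Ne.symm h1, h j hj h1 h2]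
  · intro j hj; simp [hj]

/-- Pair: determinant of chain, and determinant with head removed (0 if the head is absent). -/
def cp : List Bool → ℤ × ℤ
  | [] => (1, 0)
  | true :: l => (2 * (cp l).1 - (cp l).2, (cp l).1)
  | false :: l => ((cp l).1, 0)

/-- The subset of the chain described by a list, starting at `i`. -/
def cs : ℤ → List Bool → Finset ℤ
  | _, [] => ∅
  | i, true :: l => insert i (cs (i + 1) l)
  | i, false :: l => cs (i + 1) l

theorem cs_bound (l : List Bool) : ∀ (i x : ℤ), x ∈ cs i l → i ≤ x ∧ x < i + l.length := by
  induction l with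
  | nil => intro i x h; simp [cs] at h
  | cons b l ih =>
    intro i x h
    have key : x = i ∨ x ∈ cs (i + 1) l := by
      cases b <;> simp [cs] at h <;> tauto
    simp only [List.length_cons]
    push_cast
    rcases key with h | h
    · omega
    · have := ih _ _ h
      omega

theorem cs_cp (l : List Bool) : ∀ (i : ℤ), i + l.length ≤ 8 →
    dt (cs i l) = (cp l).1 ∧
    (cp l).2 = if i ∈ cs i l then dt ((cs i l).erase i) else 0 := by
  induction l with
  | nil =>
    intro i _
    refine ⟨?_, ?_⟩
    · have : IsEmpty (cs i [] : Finset ℤ) := ⟨fun x => by simpa [cs] using x.2⟩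
      simp [cp, dt]
    · simp [cp, cs]
  | cons b l ih =>
    intro i hi
    simp only [List.length_cons] at hi
    push_cast at hi
    have ih' := ih (i + 1) (by omega)
    have hni : i ∉ cs (i + 1) l := fun h => by have := cs_bound _ _ _ h; omega
    cases b with
    | false =>
      simp only [cs, cp, hni, if_false, and_true]
      exact ih'.1
    | true =>
      have hb := cs_bound l (i + 1)
      simp only [cs, cp, Finset.mem_insert_self, if_true, Finset.erase_insert hni]
      refine ⟨?_, ih'.1.symm⟩
      by_cases h1 : i + 1 ∈ cs (i + 1) l
      · rw [leaf1 _ i (i + 1) (by simp) (by simp [h1]) (by omega)]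
        · rw [Finset.erase_insert hni, ih'.1, ih'.2, if_pos h1]
        · have := hb _ h1
          unfold eAdj; omega
        · intro j hj hj1 hj2
          have := hb j (by simpa [hj1] using hj)
          unfold eAdj; omega
      · rw [leaf0 _ i (by simp)]
        · rw [Finset.erase_insert hni, ih'.1, ih'.2, if_neg h1]; simp
        · intro j hj hj1
          have h3 : j ∈ cs (i + 1) l := by simpa [hj1] using hj
          have := hb j h3
          have : j ≠ i + 1 := fun e => h1 (e ▸ h3)
          unfold eAdj; omega

/-- Determinant of the subset of the finite part described by booleans. -/
def ed (b0 b1 b2 b3 b4 b5 b6 b7 b8 : Bool) : ℤ :=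
  if b8 then 2 * (cp [b0, b1, b2, b3, b4, b5, b6, b7]).1
    - (if b5 then (cp [b0, b1, b2, b3, b4, false, b6, b7]).1 else 0)
  else (cp [b0, b1, b2, b3, b4, b5, b6, b7]).1

theorem mem_cs8 (b0 b1 b2 b3 b4 b5 b6 b7 : Bool) (x : ℤ) :
    x ∈ cs 0 [b0, b1, b2, b3, b4, b5, b6, b7] ↔
    (x = 0 ∧ b0) ∨ (x = 1 ∧ b1) ∨ (x = 2 ∧ b2) ∨ (x = 3 ∧ b3) ∨ (x = 4 ∧ b4) ∨ (x = 5 ∧ b5)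
      ∨ (x = 6 ∧ b6) ∨ (x = 7 ∧ b7) := by
  have key : ∀ (i : ℤ) (b : Bool) (l : List Bool),
      x ∈ cs i (b :: l) ↔ (x = i ∧ b) ∨ x ∈ cs (i + 1) l := by
    intro i b l
    cases b <;> simp [cs]
  simp only [key]
  simp [cs]

theorem det_ed (K : Finset ℤ) (hK : K ⊆ Finset.Icc 0 8) :
    dt K = ed (decide (0 ∈ K)) (decide (1 ∈ K)) (decide (2 ∈ K)) (decide (3 ∈ K))
      (decide (4 ∈ K)) (decide (5 ∈ K)) (decide (6 ∈ K)) (decide (7 ∈ K)) (decide (8 ∈ K)) := by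
  have hb : ∀ x ∈ K, x = 0 ∨ x = 1 ∨ x = 2 ∨ x = 3 ∨ x = 4 ∨ x = 5 ∨ x = 6 ∨ x = 7 ∨ x = 8 := by
    intro x hx
    have := Finset.mem_Icc.1 (hK hx)
    omega
  have e1 : cs 0 [decide (0 ∈ K), decide (1 ∈ K), decide (2 ∈ K), decide (3 ∈ K),
      decide (4 ∈ K), decide (5 ∈ K), decide (6 ∈ K), decide (7 ∈ K)] = K.erase 8 := by
    ext x
    rw [mem_cs8]
    simp only [decide_eq_true_eq, Finset.mem_erase]
    constructor
    · rintro (⟨rfl, h⟩ | ⟨rfl, h⟩ | ⟨rfl, h⟩ | ⟨rfl, h⟩ | ⟨rfl, h⟩ | ⟨rfl, h⟩ | ⟨rfl, h⟩ | ⟨rfl, h⟩) <;>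
        exact ⟨by norm_num, h⟩
    · rintro ⟨h8, hx⟩
      rcases hb x hx with rfl | rfl | rfl | rfl | rfl | rfl | rfl | rfl | rfl <;> simp_all
  have e2 : cs 0 [decide (0 ∈ K), decide (1 ∈ K), decide (2 ∈ K), decide (3 ∈ K),
      decide (4 ∈ K), false, decide (6 ∈ K), decide (7 ∈ K)] = (K.erase 8).erase 5 := by
    ext x
    rw [mem_cs8]
    simp only [decide_eq_true_eq, Finset.mem_erase]
    constructor
    · rintro (⟨rfl, h⟩ | ⟨rfl, h⟩ | ⟨rfl, h⟩ | ⟨rfl, h⟩ | ⟨rfl, h⟩ | ⟨rfl, h⟩ | ⟨rfl, h⟩ | ⟨rfl, h⟩)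
      all_goals first | (exact absurd h (by simp)) | exact ⟨by norm_num, by norm_num, h⟩
    · rintro ⟨h5, h8, hx⟩
      rcases hb x hx with rfl | rfl | rfl | rfl | rfl | rfl | rfl | rfl | rfl <;> simp_all
  unfold ed
  rw [← (cs_cp _ 0 (by simp)).1, ← (cs_cp _ 0 (by simp)).1, e1, e2]
  by_cases h8 : 8 ∈ K
  · by_cases h5 : 5 ∈ K
    · rw [leaf1 K 8 5 h8 h5 (by norm_num) (by unfold eAdj; omega)
        (by intro j _ _ _; unfold eAdj; omega)]
      simp [h8, h5]
    · rw [leaf0 K 8 h8 (by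
        intro j hj _
        have : j ≠ 5 := fun e => h5 (e ▸ hj)
        unfold eAdj; omega)]
      simp [h8, h5]
  · simp [h8]

theorem ed_pos : ∀ b0 b1 b2 b3 b4 b5 b6 b7 b8 : Bool,
    (b0 && b1 && b2 && b3 && b4 && b5 && b6 && b7 && b8) = false →
    0 < ed b0 b1 b2 b3 b4 b5 b6 b7 b8 ∧
      ed false b1 b2 b3 b4 b5 b6 b7 b8 ≤ ed b0 b1 b2 b3 b4 b5 b6 b7 b8 := by
  decide +kernel

theorem ed_full : ed true true true true true true true true true = 0 := by decide +kernel

theorem base_pos (K : Finset ℤ) (hK : K ⊆ Finset.Icc 0 8) (h : ¬ Finset.Icc (0 : ℤ) 8 ⊆ K) :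
    0 < dt K ∧ dt (K.erase 0) ≤ dt K := by
  rw [det_ed K hK, det_ed (K.erase 0) ((Finset.erase_subset _ _).trans hK)]
  have := ed_pos (decide (0 ∈ K)) (decide (1 ∈ K)) (decide (2 ∈ K)) (decide (3 ∈ K))
      (decide (4 ∈ K)) (decide (5 ∈ K)) (decide (6 ∈ K)) (decide (7 ∈ K)) (decide (8 ∈ K)) (by
    by_contra hc
    apply h
    simp only [Bool.not_eq_false, Bool.and_eq_true, decide_eq_true_eq] at hc
    intro x hx
    have := Finset.mem_Icc.1 hx
    have : x = 0 ∨ x = 1 ∨ x = 2 ∨ x = 3 ∨ x = 4 ∨ x = 5 ∨ x = 6 ∨ x = 7 ∨ x = 8 := by omega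
    rcases this with rfl | rfl | rfl | rfl | rfl | rfl | rfl | rfl | rfl <;> tauto)
  simpa using this

theorem gen_pos (n : ℕ) : ∀ K : Finset ℤ, K ⊆ Finset.Icc (-(n : ℤ)) 8 →
    ¬ Finset.Icc (0 : ℤ) 8 ⊆ K →
    0 < dt K ∧ dt (K.erase (-(n : ℤ))) ≤ dt K := by
  induction n with
  | zero => intro K hK h; simpa using base_pos K (by simpa using hK) h
  | succ n ih =>
    intro K hK h
    obtain ⟨m, hm⟩ : ∃ m : ℤ, m = -((n : ℤ) + 1) := ⟨_, rfl⟩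
    push_cast at hK ⊢
    rw [← hm] at hK ⊢
    have hK' : K.erase m ⊆ Finset.Icc (-(n : ℤ)) 8 := by
      intro x hx
      have h1 := Finset.mem_erase.1 hx
      have h2 := Finset.mem_Icc.1 (hK h1.2)
      have h3 := h1.1
      rw [Finset.mem_Icc]
      omega
    have ih' := ih (K.erase m) hK' (fun hc => h (hc.trans (Finset.erase_subset _ _)))
    by_cases hmK : m ∈ K
    · by_cases hp : -(n : ℤ) ∈ K
      · rw [leaf1 K m (-(n : ℤ)) hmK hp (by omega) (by unfold eAdj; omega) (by
          intro j hj h1 h2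
          have := Finset.mem_Icc.1 (hK hj)
          unfold eAdj; omega)]
        constructor <;> linarith [ih'.1, ih'.2]
      · rw [leaf0 K m hmK (by
          intro j hj h1
          have := Finset.mem_Icc.1 (hK hj)
          have : j ≠ -(n : ℤ) := fun e => hp (e ▸ hj)
          unfold eAdj; omega)]
        constructor <;> linarith [ih'.1]
    · rw [Finset.erase_eq_of_notMem hmK] at ih' ⊢
      exact ⟨ih'.1, le_refl _⟩

/-- For the family `E_{9+n}` (the affine diagram `E_9` on nodes `{0, …, 8}` extended
by a chain `A_n` on the nodes `{-1, …, -n}` attached at the node `0`), a set of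
nodes `J` is spherical if and only if `J ∩ I₀` is spherical for `E_9`, where
`I₀ = {0, …, 8}` is the set of nodes of the `E_9` subdiagram. -/
theorem stmt7 (n : ℕ) (J : Finset ℤ) (hJ : J ⊆ Finset.Icc (-(n : ℤ)) 8) :
    eSph J ↔ eSph (J ∩ Finset.Icc (0 : ℤ) 8) := by
  constructor
  · intro h K hK
    exact h K (hK.trans Finset.inter_subset_left)
  · intro h K hK
    refine (gen_pos n K (hK.trans hJ) ?_).1
    intro hc
    have h0 := h (Finset.Icc 0 8) (Finset.subset_inter (hc.trans hK) (Finset.Subset.refl _))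
    change 0 < dt _ at h0
    rw [det_ed _ (Finset.Subset.refl _)] at h0
    simp [ed_full] at h0
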